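/- arXiv:2105.09709 — 2 statements merged into one kernel-verified Lean document; each statement's English description precedes it below -/
import Mathlib

section
/- Let f : (0,∞) → ℝ belong to the class 𝒜, i.e. f is concave, nondecreasing, and nonnegative. Then G[F[f]](x) = f(x) for every x > 0. -/
/-!
Substituting `s = y t` gives `F[f](y) = sup_s f(s) y / (s + y)`, and substituting `y = x t` gives
`G[F[f]](x) = inf_y sup_s f(s) (y + x) / (s + y)`.
Taking `s = x` shows that this is at least `f x`. For the upper bound, a function of class 𝒜 has at
`x` a supporting line `s ↦ c + m s` with `c, m ≥ 0` (`exists_support_line`). Enlarging both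
coefficients by `ε > 0` gives a majorant `a + b s` with `a, b > 0`; then `F[f](a / b) ≤ a`
(`Ftr_le_of_affine`), and the choice `y = a / b` bounds `G[F[f]](x)` by `a + b x = f x + ε (1 + x)`.
-/

open Set Filter

/-- The set of values `f (x*t) / (t+1)` for `t > 0`. -/
def FSet (f : ℝ → ℝ) (x : ℝ) : Set ℝ := {y : ℝ | ∃ t : ℝ, 0 < t ∧ y = f (x * t) / (t + 1)}

/-- The transform `F[f](x) = sup_{t>0} f(xt)/(t+1)`. -/
noncomputable def Ftr (f : ℝ → ℝ) (x : ℝ) : ℝ := sSup (FSet f x)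

/-- The set of values `f (x*t) * (1 + 1/t)` for `t > 0`. -/
def GSet (f : ℝ → ℝ) (x : ℝ) : Set ℝ := {y : ℝ | ∃ t : ℝ, 0 < t ∧ y = f (x * t) * (1 + 1 / t)}

/-- The transform `G[f](x) = inf_{t>0} f(xt)(1+1/t)`. -/
noncomputable def Gtr (f : ℝ → ℝ) (x : ℝ) : ℝ := sInf (GSet f x)

/-- The class 𝒜: concave, nondecreasing, nonnegative functions on (0,∞). -/
def InClassA (φ : ℝ → ℝ) : Prop :=
  ConcaveOn ℝ (Ioi (0:ℝ)) φ ∧ MonotoneOn φ (Ioi (0:ℝ)) ∧ ∀ x > (0:ℝ), 0 ≤ φ x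

/-- The class ℬ: concave, nonincreasing, nonpositive functions on (0,∞) with an
asymptote `y = k t` through the origin. -/
def InClassB (φ : ℝ → ℝ) : Prop :=
  ConcaveOn ℝ (Ioi (0:ℝ)) φ ∧ AntitoneOn φ (Ioi (0:ℝ)) ∧ (∀ x > (0:ℝ), φ x ≤ 0) ∧
    ∃ k : ℝ, Tendsto (fun t => φ t - k * t) atTop (nhds 0)

/-- Values at `x` of members of 𝒜 majorizing `f` on (0,∞). -/
def ASet (f : ℝ → ℝ) (x : ℝ) : Set ℝ :=
  {y : ℝ | ∃ φ : ℝ → ℝ, InClassA φ ∧ (∀ t > (0:ℝ), f t ≤ φ t) ∧ y = φ x}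

/-- The 𝒜-hull of `f`. -/
noncomputable def hullA (f : ℝ → ℝ) (x : ℝ) : ℝ := sInf (ASet f x)

/-- Values at `x` of members of ℬ majorizing `f` on (0,∞). -/
def BSet (f : ℝ → ℝ) (x : ℝ) : Set ℝ :=
  {y : ℝ | ∃ φ : ℝ → ℝ, InClassB φ ∧ (∀ t > (0:ℝ), f t ≤ φ t) ∧ y = φ x}

/-- The ℬ-hull of `f`. -/
noncomputable def hullB (f : ℝ → ℝ) (x : ℝ) : ℝ := sInf (BSet f x)

/-- A supporting line at `x`. Its slope is nonnegative because `f` is nondecreasing, its intercept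
because `f` is nonnegative near `0`. -/
lemma exists_support_line {f : ℝ → ℝ} (hf : InClassA f) {x : ℝ} (hx : 0 < x) :
    ∃ c m : ℝ, 0 ≤ c ∧ 0 ≤ m ∧ f x = c + m * x ∧ ∀ s > (0:ℝ), f s ≤ c + m * s := by
  obtain ⟨hc, hm, hn⟩ := hf
  -- the slope is the supremum of the slopes of the chords to the right of `x`
  set S : Set ℝ := {y | ∃ s, x < s ∧ y = (f s - f x) / (s - x)} with hS
  have hle : ∀ r, 0 < r → r < x → ∀ y ∈ S, y ≤ (f x - f r) / (x - r) := by
    rintro r hr hrx y ⟨s, hs, rfl⟩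
    exact hc.slope_anti_adjacent (mem_Ioi.2 hr) (mem_Ioi.2 (hx.trans hs)) hrx hs
  have hbdd : BddAbove S := ⟨_, hle (x / 2) (by linarith) (by linarith)⟩
  have hmem : (f (x + 1) - f x) / (x + 1 - x) ∈ S := ⟨x + 1, by linarith, rfl⟩
  have hm0 : 0 ≤ sSup S := by
    refine le_trans ?_ (le_csSup hbdd hmem)
    have : f x ≤ f (x + 1) := hm (mem_Ioi.2 hx) (mem_Ioi.2 (by linarith)) (by linarith)
    exact div_nonneg (by linarith) (by linarith)
  have hline : ∀ s > (0:ℝ), f s ≤ f x - sSup S * x + sSup S * s := by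
    intro s hs
    rcases lt_trichotomy s x with h | h | h
    · have h1 : sSup S ≤ (f x - f s) / (x - s) := csSup_le ⟨_, hmem⟩ (hle s hs h)
      rw [le_div_iff₀ (by linarith)] at h1
      linarith
    · subst h; linarith
    · have h1 : (f s - f x) / (s - x) ≤ sSup S := le_csSup hbdd ⟨s, h, rfl⟩
      rw [div_le_iff₀ (by linarith)] at h1
      linarith
  refine ⟨f x - sSup S * x, sSup S, ?_, hm0, by ring, hline⟩
  by_contra! hneg
  -- a negative intercept `-d` would make the line negative at `s = d / (m + 1)`
  have hs : 0 < (sSup S * x - f x) / (sSup S + 1) := div_pos (by linarith) (by linarith)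
  have h1 := hline _ hs
  have h2 := hn _ hs
  have h3 : (sSup S * x - f x) / (sSup S + 1) * (sSup S + 1) = sSup S * x - f x :=
    div_mul_cancel₀ _ (by linarith)
  linarith

lemma bddAbove_FSet_of_affine {f : ℝ → ℝ} {a b y : ℝ} (ha : 0 ≤ a) (hb : 0 ≤ b) (hy : 0 < y)
    (h : ∀ s > (0:ℝ), f s ≤ a + b * s) : BddAbove (FSet f y) := by
  refine ⟨a + b * y, ?_⟩
  rintro _ ⟨t, ht, rfl⟩
  rw [div_le_iff₀ (by linarith)]
  have := h (y * t) (mul_pos hy ht)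
  nlinarith [mul_nonneg ha ht.le, mul_nonneg hb hy.le]

/-- At `y = a / b` the majorant `a + b s` gives the quotient `(a + b y t) / (t + 1)` the constant
value `a`. -/
lemma Ftr_le_of_affine {f : ℝ → ℝ} {a b : ℝ} (ha : 0 < a) (hb : 0 < b)
    (h : ∀ s > (0:ℝ), f s ≤ a + b * s) : Ftr f (a / b) ≤ a := by
  refine csSup_le ⟨_, 1, one_pos, rfl⟩ ?_
  rintro _ ⟨t, ht, rfl⟩
  rw [div_le_iff₀ (by linarith)]
  have h1 := h (a / b * t) (mul_pos (div_pos ha hb) ht)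
  have h2 : b * (a / b * t) = a * t := by field_simp
  linarith

/-- on the class 𝒜 the composition `G ∘ F` is the identity. -/
theorem stmt_2 (f : ℝ → ℝ) (hf : InClassA f) :
    ∀ x > (0:ℝ), Gtr (Ftr f) x = f x := by
  intro x hx
  obtain ⟨c, m, hc, hm, hfx, hline⟩ := exists_support_line hf hx
  have hlow : ∀ z ∈ GSet (Ftr f) x, f x ≤ z := by
    rintro _ ⟨t, ht, rfl⟩
    -- the parameter `1 / t` in the supremum defining `F[f](x t)` corresponds to `s = x`
    have h1 : f (x * t * (1 / t)) / (1 / t + 1) ≤ Ftr f (x * t) :=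
      le_csSup (bddAbove_FSet_of_affine hc hm (mul_pos hx ht) hline)
        ⟨1 / t, one_div_pos.2 ht, rfl⟩
    have h2 : x * t * (1 / t) = x := by field_simp
    have h3 : 0 < 1 / t := one_div_pos.2 ht
    rw [h2, div_le_iff₀ (by linarith)] at h1
    linarith
  apply le_antisymm
  · refine le_of_forall_pos_le_add fun δ hδ => ?_
    obtain ⟨ε, hε, hεδ⟩ : ∃ ε : ℝ, 0 < ε ∧ ε * (1 + x) = δ :=
      ⟨δ / (1 + x), div_pos hδ (by linarith), div_mul_cancel₀ _ (by linarith)⟩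
    have ha : 0 < c + ε := by linarith
    have hb : 0 < m + ε := by linarith
    have hF : Ftr f ((c + ε) / (m + ε)) ≤ c + ε := by
      refine Ftr_le_of_affine ha hb fun s hs => ?_
      have := hline s hs
      nlinarith [mul_pos hε hs]
    have ht : 0 < (c + ε) / (m + ε) / x := div_pos (div_pos ha hb) hx
    have hG : Gtr (Ftr f) x ≤ _ := csInf_le ⟨f x, hlow⟩ ⟨_, ht, rfl⟩
    rw [mul_div_cancel₀ _ hx.ne'] at hG
    have h1 : (c + ε) * (1 + 1 / ((c + ε) / (m + ε) / x)) = c + ε + (m + ε) * x := by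
      field_simp
    have h2 := mul_le_mul_of_nonneg_right hF
      (add_pos one_pos (one_div_pos.2 ht)).le
    linarith
  · exact le_csInf ⟨_, 1, one_pos, rfl⟩ hlow
end

section
/- Let f : (0,∞) → ℝ be a nonnegative function of at most linear growth (there is C > 0 with f(t) ≤ C(t+1) for all t > 0). Then G[F[f]] is the smallest concave majorant of f, i.e. for every x > 0, G[F[f]](x) = inf{φ(x) : φ : (0,∞) → ℝ concave, φ(t) ≥ f(t) for all t > 0}. -/
/-!
Substituting `y = x * t`, the number `F[f](y)` is the least `a` such that the increasing line
`s ↦ a * (1 + s / y)` majorizes `f`, and `G[F[f]](x)` is the infimum over `y` of the values at `x`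
of these least lines. Lines are concave, so `G[F[f]](x)` is at least the concave hull of `f`.
Conversely, a concave majorant `φ` of `f` has a supporting line `k * s + b` at `x`; it lies above
`φ ≥ f ≥ 0` on `(0, ∞)`, so `k, b ≥ 0`. Adding `ε > 0` to both coefficients makes the line of the
form `a * (1 + s / y)` with `a, y > 0`, and it costs only `ε * (1 + x)` at `x`.
-/

open Set Filter

/-- A concave function on `(0, ∞)` has a supporting line at each point. The slope is the supremum
of the difference quotients to the right of `x`. -/
lemma exists_supporting_slope {φ : ℝ → ℝ} (hφ : ConcaveOn ℝ (Ioi (0:ℝ)) φ) {x : ℝ} (hx : 0 < x) :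
    ∃ k : ℝ, ∀ s > (0:ℝ), φ s ≤ φ x + k * (s - x) := by
  let S : Set ℝ := Set.image (fun s => (φ s - φ x) / (s - x)) (Ioi x)
  have hub : ∀ r, 0 < r → r < x → (φ x - φ r) / (x - r) ∈ upperBounds S := by
    rintro r hr hrx _ ⟨s, hs, rfl⟩
    exact hφ.slope_anti_adjacent hr (show (0:ℝ) < s from hx.trans hs) hrx hs
  have hbdd : BddAbove S := ⟨_, hub (x / 2) (by linarith) (by linarith)⟩
  have hne : S.Nonempty := ⟨_, x + 1, by simp, rfl⟩
  refine ⟨sSup S, fun s hs => ?_⟩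
  rcases lt_trichotomy s x with h | rfl | h
  · have h1 := csSup_le hne (hub s hs h)
    rw [le_div_iff₀ (by linarith)] at h1
    linarith
  · simp
  · have h1 : (φ s - φ x) / (s - x) ≤ sSup S := le_csSup hbdd ⟨s, h, rfl⟩
    rw [div_le_iff₀ (by linarith)] at h1
    linarith

lemma coeff_nonneg_of_line_nonneg {k b : ℝ} (h : ∀ s > (0:ℝ), 0 ≤ b + k * s) : 0 ≤ k ∧ 0 ≤ b := by
  have hk : 0 ≤ k := by
    by_contra! hk
    have h1 := h ((|b| + 1) / (-k)) (div_pos (by positivity) (by linarith))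
    have h2 : k * ((|b| + 1) / (-k)) = -(|b| + 1) := by
      have := hk.ne
      field_simp
    linarith [le_abs_self b]
  refine ⟨hk, le_of_forall_pos_le_add fun ε hε => ?_⟩
  have h1 := h (ε / (k + 1)) (by positivity)
  have h2 : k * (ε / (k + 1)) ≤ ε := by
    rw [← mul_div_assoc, div_le_iff₀ (by positivity)]
    nlinarith
  linarith

lemma FSet_nonempty (f : ℝ → ℝ) (y : ℝ) : (FSet f y).Nonempty := ⟨_, 1, one_pos, rfl⟩

/-- If a line `s ↦ a * (1 + s / y)` majorizes `f`, its constant term bounds the set defining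
`F[f](y)`. -/
lemma mem_upperBounds_FSet {f : ℝ → ℝ} {a y : ℝ} (hy : 0 < y)
    (h : ∀ s > (0:ℝ), f s ≤ a * (1 + s / y)) : a ∈ upperBounds (FSet f y) := by
  rintro _ ⟨t, ht, rfl⟩
  have h1 := h (y * t) (by positivity)
  rw [mul_div_cancel_left₀ _ hy.ne'] at h1
  rw [div_le_iff₀ (by positivity)]
  linarith

lemma bddAbove_FSet {f : ℝ → ℝ} {C : ℝ} (hC : 0 < C) (hlin : ∀ t > (0:ℝ), f t ≤ C * (t + 1))
    {y : ℝ} (hy : 0 < y) : BddAbove (FSet f y) := by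
  refine ⟨C * (1 + y), mem_upperBounds_FSet hy fun s hs => (hlin s hs).trans ?_⟩
  have : C * (1 + y) * (1 + s / y) = C * (s + 1) + C * (y + s / y) := by
    field_simp
    ring
  have : 0 < C * (y + s / y) := by positivity
  linarith

lemma le_Ftr_mul {f : ℝ → ℝ} {y : ℝ} (hy : 0 < y) (hb : BddAbove (FSet f y)) {s : ℝ}
    (hs : 0 < s) : f s ≤ Ftr f y * (1 + s / y) := by
  have h1 : f (y * (s / y)) / (s / y + 1) ≤ Ftr f y := le_csSup hb ⟨s / y, by positivity, rfl⟩
  rw [mul_div_cancel₀ _ hy.ne', div_le_iff₀ (by positivity)] at h1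
  linarith

lemma Ftr_nonneg {f : ℝ → ℝ} (hf : ∀ t > (0:ℝ), 0 ≤ f t) {y : ℝ} (hy : 0 < y) : 0 ≤ Ftr f y := by
  refine Real.sSup_nonneg ?_
  rintro _ ⟨t, ht, rfl⟩
  exact div_nonneg (hf _ (by positivity)) (by positivity)

/-- for a nonnegative function of at most linear growth, `G[F[f]]` is
the smallest concave majorant of `f` on (0,∞). -/
theorem stmt_5 (f : ℝ → ℝ) (C : ℝ) (hC : 0 < C)
    (hlin : ∀ t > (0:ℝ), f t ≤ C * (t + 1))
    (hnonneg : ∀ t > (0:ℝ), 0 ≤ f t) :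
    ∀ x > (0:ℝ), Gtr (Ftr f) x =
      sInf {y : ℝ | ∃ φ : ℝ → ℝ, ConcaveOn ℝ (Ioi (0:ℝ)) φ ∧
        (∀ t > (0:ℝ), f t ≤ φ t) ∧ y = φ x} := by
  intro x hx
  have hline : ∀ a c : ℝ, ConcaveOn ℝ (Ioi (0:ℝ)) fun s => a * (1 + s / c) := by
    refine fun a c => ⟨convex_Ioi 0, fun u _ v _ p q _ _ hpq => le_of_eq ?_⟩
    simp only [smul_eq_mul]
    linear_combination a * hpq
  apply le_antisymm
  · refine le_csInf ⟨_, _, hline (Ftr f 1) 1,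
      fun t ht => le_Ftr_mul one_pos (bddAbove_FSet hC hlin one_pos) ht, rfl⟩ ?_
    rintro _ ⟨φ, hφ, hmaj, rfl⟩
    obtain ⟨k, hk⟩ := exists_supporting_slope hφ hx
    obtain ⟨hk0, hb0⟩ := coeff_nonneg_of_line_nonneg (k := k) (b := φ x - k * x) fun s hs => by
      linarith [hk s hs, hmaj s hs, hnonneg s hs]
    refine le_of_forall_pos_le_add fun δ hδ => ?_
    -- `ε` is chosen so that raising both coefficients by `ε` costs `ε * (1 + x) = δ` at `x`.
    obtain ⟨ε, hε, hεδ⟩ : ∃ ε : ℝ, 0 < ε ∧ ε * (1 + x) = δ :=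
      ⟨δ / (1 + x), by positivity, by field_simp⟩
    obtain ⟨a, ha⟩ : ∃ a, a = φ x - k * x + ε := ⟨_, rfl⟩
    have ha0 : 0 < a := by linarith
    obtain ⟨y, hy⟩ : ∃ y, y = a / (k + ε) := ⟨_, rfl⟩
    have hy0 : 0 < y := by rw [hy]; positivity
    have hval : ∀ s, a * (1 + s / y) = a + (k + ε) * s := fun s => by
      rw [hy]
      field_simp
    have hF : Ftr f y ≤ a := csSup_le (FSet_nonempty f y) <| mem_upperBounds_FSet hy0 fun s hs => by
      rw [hval, ha]
      linarith [hk s hs, hmaj s hs, mul_pos hε hs]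
    have hbdd : BddBelow (GSet (Ftr f) x) := by
      refine ⟨0, ?_⟩
      rintro _ ⟨t, ht, rfl⟩
      exact mul_nonneg (Ftr_nonneg hnonneg (by positivity)) (by positivity)
    have hG : Gtr (Ftr f) x ≤ Ftr f y * (1 + x / y) := by
      refine csInf_le hbdd ⟨y / x, by positivity, ?_⟩
      rw [mul_div_cancel₀ _ hx.ne', one_div_div]
    calc Gtr (Ftr f) x ≤ Ftr f y * (1 + x / y) := hG
      _ ≤ a * (1 + x / y) := mul_le_mul_of_nonneg_right hF (by positivity)
      _ = φ x + δ := by rw [hval, ha, ← hεδ]; ring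
  · refine le_csInf ⟨_, 1, one_pos, rfl⟩ ?_
    rintro _ ⟨t, ht, rfl⟩
    have hxt : 0 < x * t := by positivity
    refine csInf_le ⟨0, ?_⟩ ⟨_, hline (Ftr f (x * t)) (x * t),
      fun s hs => le_Ftr_mul hxt (bddAbove_FSet hC hlin hxt) hs, ?_⟩
    · rintro _ ⟨φ, -, hmaj, rfl⟩
      exact (hnonneg x hx).trans (hmaj x hx)
    · field_simp
end
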